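/- In the E7 configuration of 63 projective lines, there exist 7-tuples of mutually non-orthogonal lines, but there are no 8-tuples of mutually non-orthogonal lines. -/

import Mathlib

/-- The projective line (ray) spanned by a vector in `ℝ⁸`. -/
def ray8 (v : Fin 8 → ℝ) : Submodule ℝ (Fin 8 → ℝ) := Submodule.span ℝ {v}

/-- Orthogonality of subspaces of `ℝ⁸` with respect to the standard inner product. -/
def Perp8 (L M : Submodule ℝ (Fin 8 → ℝ)) : Prop :=
  ∀ x ∈ L, ∀ y ∈ M, ∑ i, x i * y i = 0

/-- The `E7` root system, modeled in the hyperplane `{Σ aᵢ = 0} ⊂ ℝ⁸` as the union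
of the `S₈`-orbits of `(1,−1,0,0,0,0,0,0)` and `(1/2)(1,1,1,1,−1,−1,−1,−1)`. -/
def E7roots : Set (Fin 8 → ℝ) :=
  {v | ∃ σ : Equiv.Perm (Fin 8),
    v = ![1, -1, 0, 0, 0, 0, 0, 0] ∘ σ ∨
    v = ((1 : ℝ) / 2) • (![1, 1, 1, 1, -1, -1, -1, -1] ∘ σ)}

/-- The 63 projective lines of the `E7` configuration. -/
def E7lines : Set (Submodule ℝ (Fin 8 → ℝ)) := ray8 '' E7roots

/-!
Choose a root on each of `n` mutually non-orthogonal distinct lines, with `n` even. Roots have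
norm two and integral inner products, so by Cauchy–Schwarz the inner product of any two of the
chosen roots is `±1`. Their Gram matrix is thus congruent modulo two to `J - 1`, with `J` the
all-ones matrix, and `(J - 1)² = n J - 2 J + 1 = 1` modulo two, so the Gram determinant is odd and
the roots are independent. All roots lie in a hyperplane of `ℝ⁸`, so `n = 8` is impossible.
Conversely, the seven roots `e₀ - eⱼ` with `j ≠ 0` have pairwise inner products `1`.
-/

open Module

lemma sq_ones_sub_one_eq_one {ι R : Type*} [Fintype ι] [DecidableEq ι] [CommRing R] [CharP R 2]
    (hι : Even (Fintype.card ι)) : (Matrix.of 1 - 1 : Matrix ι ι R) ^ 2 = 1 := by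
  have card_eq_zero : (Fintype.card ι : R) = 0 := (CharP.cast_eq_zero_iff R 2 _).2 hι.two_dvd
  have sq_ones : (Matrix.of 1 : Matrix ι ι R) * Matrix.of 1 = 0 := by
    ext i j
    simp [Matrix.mul_apply, card_eq_zero]
  calc (Matrix.of 1 - 1 : Matrix ι ι R) ^ 2
      = Matrix.of 1 * Matrix.of 1 - (2 : R) • Matrix.of 1 + 1 := by
        rw [two_smul]
        noncomm_ring
    _ = 1 := by simp [sq_ones, CharTwo.two_eq_zero]

lemma odd_det_of_even_diag_of_odd_offDiag {ι : Type*} [Fintype ι] [DecidableEq ι]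
    (hι : Even (Fintype.card ι)) {G : Matrix ι ι ℤ} (hdiag : ∀ i, Even (G i i))
    (hoff : Pairwise fun i j => Odd (G i j)) : Odd G.det := by
  have map_eq : G.map (Int.castRingHom (ZMod 2)) = Matrix.of 1 - 1 := by
    ext i j
    rcases eq_or_ne i j with rfl | hij
    · simpa using (ZMod.intCast_eq_zero_iff_even).2 (hdiag i)
    · simpa [hij] using (ZMod.intCast_eq_one_iff_odd).2 (hoff hij)
  have sq_det : (G.det : ZMod 2) ^ 2 = 1 := by
    rw [← eq_intCast (Int.castRingHom (ZMod 2)), RingHom.map_det, RingHom.mapMatrix_apply,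
      map_eq, ← Matrix.det_pow, sq_ones_sub_one_eq_one hι, Matrix.det_one]
  refine Int.not_even_iff_odd.1 fun heven => ?_
  simp [(ZMod.intCast_eq_zero_iff_even).2 heven] at sq_det

lemma linearIndependent_of_gram_even_diag_of_odd_offDiag {ι R M : Type*} [Fintype ι] [CommRing R]
    [IsDomain R] [CharZero R] [AddCommGroup M] [Module R M] (B : LinearMap.BilinForm R M)
    (hι : Even (Fintype.card ι)) {v : ι → M} {G : Matrix ι ι ℤ}
    (hG : ∀ i j, B (v i) (v j) = G i j) (hdiag : ∀ i, Even (G i i))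
    (hoff : Pairwise fun i j => Odd (G i j)) : LinearIndependent R v := by
  classical
  have det_ne_zero : (G.map (Int.castRingHom R)).det ≠ 0 := by
    rw [← RingHom.mapMatrix_apply, ← RingHom.map_det, eq_intCast, Int.cast_ne_zero]
    intro h
    simpa [h] using odd_det_of_even_diag_of_odd_offDiag hι hdiag hoff
  refine Fintype.linearIndependent_iff.2 fun c hc => congrFun ?_
  refine Matrix.eq_zero_of_mulVec_eq_zero det_ne_zero (funext fun i => ?_)
  calc (G.map (Int.castRingHom R)).mulVec c i = B (v i) (∑ j, c j • v j) := by
        simp [Matrix.mulVec, dotProduct, hG, mul_comm]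
    _ = 0 := by rw [hc, map_zero]

lemma card_lt_finrank_of_linearIndependent_of_mem {K V ι : Type*} [DivisionRing K]
    [AddCommGroup V] [Module K V] [FiniteDimensional K V] [Fintype ι] {v : ι → V}
    (hv : LinearIndependent K v) {W : Submodule K V} (hW : W ≠ ⊤) (hmem : ∀ i, v i ∈ W) :
    Fintype.card ι < finrank K V := by
  rw [← finrank_span_eq_card hv]
  refine Submodule.finrank_lt (ne_top_of_le_ne_top hW (Submodule.span_le.2 ?_))
  rintro _ ⟨i, rfl⟩
  exact hmem i

lemma span_singleton_eq_iff_sq_dotProduct_eq {n K : Type*} [Fintype n] [Field K] [LinearOrder K]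
    [IsStrictOrderedRing K] {v w : n → K} (hv : v ≠ 0) (hw : w ≠ 0) :
    K ∙ v = K ∙ w ↔ (v ⬝ᵥ w) ^ 2 = (v ⬝ᵥ v) * (w ⬝ᵥ w) := by
  constructor
  · intro h
    obtain ⟨c, rfl⟩ := Submodule.mem_span_singleton.1 (h ▸ Submodule.mem_span_singleton_self v)
    simp only [smul_dotProduct, dotProduct_smul, smul_eq_mul]
    ring
  · intro h
    have hvv : v ⬝ᵥ v ≠ 0 := mt dotProduct_self_eq_zero.1 hv
    have hww : w ⬝ᵥ w ≠ 0 := mt dotProduct_self_eq_zero.1 hw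
    have hvw : v ⬝ᵥ w ≠ 0 := by
      intro h0
      rw [h0] at h
      exact mul_ne_zero hvv hww (by simpa using h.symm)
    have proportional : (w ⬝ᵥ w) • v - (v ⬝ᵥ w) • w = 0 := by
      rw [← dotProduct_self_eq_zero]
      simp only [sub_dotProduct, dotProduct_sub, smul_dotProduct, dotProduct_smul, smul_eq_mul,
        dotProduct_comm w v]
      linear_combination -(w ⬝ᵥ w) * h
    rw [← Submodule.span_singleton_smul_eq hww.isUnit v, sub_eq_zero.1 proportional,
      Submodule.span_singleton_smul_eq hvw.isUnit w]

lemma perp8_ray8_iff (v w : Fin 8 → ℝ) : Perp8 (ray8 v) (ray8 w) ↔ v ⬝ᵥ w = 0 := by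
  constructor
  · intro h
    exact h v (Submodule.mem_span_singleton_self v) w (Submodule.mem_span_singleton_self w)
  · intro h x hx y hy
    obtain ⟨c, rfl⟩ := Submodule.mem_span_singleton.1 hx
    obtain ⟨d, rfl⟩ := Submodule.mem_span_singleton.1 hy
    change (c • v) ⬝ᵥ (d • w) = 0
    rw [smul_dotProduct, dotProduct_smul, h, smul_zero, smul_zero]

/-- The `E7` root lattice: the vectors of `ℤ⁸ ∪ (ℤ + 1/2)⁸` with coordinate sum zero. They are
written as `a - k/2` with `a` and `k` integral, so that the parity of `k` selects the coset; the
coordinate sum is then zero exactly when `∑ i, a i = 4 * k`. -/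
def E7lattice : Set (Fin 8 → ℝ) :=
  {v | ∃ (a : Fin 8 → ℤ) (k : ℤ), (∀ i, v i = a i - k / 2) ∧ ∑ i, a i = 4 * k}

lemma comp_perm_mem_E7lattice {v : Fin 8 → ℝ} (hv : v ∈ E7lattice) (σ : Equiv.Perm (Fin 8)) :
    v ∘ σ ∈ E7lattice := by
  obtain ⟨a, k, hvak, hsum⟩ := hv
  exact ⟨a ∘ σ, k, fun i => hvak (σ i), (Equiv.sum_comp σ a).trans hsum⟩

lemma sum_eq_zero_of_mem_E7lattice {v : Fin 8 → ℝ} (hv : v ∈ E7lattice) : ∑ i, v i = 0 := by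
  obtain ⟨a, k, hvak, hsum⟩ := hv
  have hsum_real : ∑ i, (a i : ℝ) = 4 * k := mod_cast hsum
  simp only [hvak, Finset.sum_sub_distrib, hsum_real, Finset.sum_const, Finset.card_univ,
    Fintype.card_fin, nsmul_eq_mul]
  ring

lemma exists_int_dotProduct_eq_of_mem_E7lattice {v w : Fin 8 → ℝ} (hv : v ∈ E7lattice)
    (hw : w ∈ E7lattice) : ∃ n : ℤ, v ⬝ᵥ w = n := by
  have sum_w : ∑ i, w i = 0 := sum_eq_zero_of_mem_E7lattice hw
  obtain ⟨a, k, hvak, hsum⟩ := hv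
  obtain ⟨b, l, hwbl, -⟩ := hw
  have hsum_real : ∑ i, (a i : ℝ) = 4 * k := mod_cast hsum
  refine ⟨∑ i, a i * b i - 2 * k * l, ?_⟩
  calc v ⬝ᵥ w = ∑ i, (a i * w i - k / 2 * w i) :=
        Finset.sum_congr rfl fun i _ => by rw [hvak]; ring
    _ = ∑ i, (a i : ℝ) * w i := by
        rw [Finset.sum_sub_distrib, ← Finset.mul_sum, sum_w, mul_zero, sub_zero]
    _ = ∑ i, ((a i : ℝ) * b i - a i * (l / 2)) := by simp only [hwbl, mul_sub]
    _ = ((∑ i, a i * b i - 2 * k * l : ℤ) : ℝ) := by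
        rw [Finset.sum_sub_distrib, ← Finset.sum_mul, hsum_real]
        push_cast
        ring

lemma E7roots_subset_E7lattice : E7roots ⊆ E7lattice := by
  rintro _ ⟨σ, rfl | rfl⟩
  · refine comp_perm_mem_E7lattice ⟨![1, -1, 0, 0, 0, 0, 0, 0], 0, fun i => ?_, by decide⟩ σ
    fin_cases i <;> simp
  · rw [← Pi.smul_comp]
    refine comp_perm_mem_E7lattice ⟨![1, 1, 1, 1, 0, 0, 0, 0], 1, fun i => ?_, by decide⟩ σ
    fin_cases i <;> norm_num

lemma dotProduct_self_of_mem_E7roots {v : Fin 8 → ℝ} (hv : v ∈ E7roots) : v ⬝ᵥ v = 2 := by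
  obtain ⟨σ, rfl | rfl⟩ := hv
  · rw [comp_equiv_dotProduct_comp_equiv]
    simp only [dotProduct, Fin.sum_univ_eight, Matrix.cons_val]
    norm_num
  · rw [smul_dotProduct, dotProduct_smul, comp_equiv_dotProduct_comp_equiv]
    simp only [dotProduct, Fin.sum_univ_eight, Matrix.cons_val]
    norm_num

lemma ne_zero_of_mem_E7roots {v : Fin 8 → ℝ} (hv : v ∈ E7roots) : v ≠ 0 := by
  rintro rfl
  simpa using dotProduct_self_of_mem_E7roots hv

lemma ray8_eq_ray8_iff_sq_dotProduct_eq_four {v w : Fin 8 → ℝ} (hv : v ∈ E7roots)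
    (hw : w ∈ E7roots) : ray8 v = ray8 w ↔ (v ⬝ᵥ w) ^ 2 = 4 := by
  rw [ray8, ray8, span_singleton_eq_iff_sq_dotProduct_eq (ne_zero_of_mem_E7roots hv)
    (ne_zero_of_mem_E7roots hw), dotProduct_self_of_mem_E7roots hv,
    dotProduct_self_of_mem_E7roots hw]
  norm_num

lemma odd_dotProduct_of_not_perp8 {v w : Fin 8 → ℝ} (hv : v ∈ E7roots) (hw : w ∈ E7roots)
    (hne : ray8 v ≠ ray8 w) (hperp : ¬ Perp8 (ray8 v) (ray8 w)) {n : ℤ} (hn : v ⬝ᵥ w = n) :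
    Odd n := by
  rw [perp8_ray8_iff, hn, Int.cast_eq_zero] at hperp
  have sq_lt : n ^ 2 < 4 := by
    have cauchy_schwarz : (v ⬝ᵥ w) ^ 2 ≤ (v ⬝ᵥ v) * (w ⬝ᵥ w) := by
      simpa only [dotProduct, sq] using Finset.sum_mul_sq_le_sq_mul_sq Finset.univ v w
    have sq_le_four : (v ⬝ᵥ w) ^ 2 ≤ 4 := by
      rw [dotProduct_self_of_mem_E7roots hv, dotProduct_self_of_mem_E7roots hw] at cauchy_schwarz
      linarith
    have sq_lt_four : (v ⬝ᵥ w) ^ 2 < 4 :=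
      sq_le_four.lt_of_ne (mt (ray8_eq_ray8_iff_sq_dotProduct_eq_four hv hw).2 hne)
    rw [hn] at sq_lt_four
    exact_mod_cast sq_lt_four
  have neg_two_lt : -2 < n := by nlinarith
  have lt_two : n < 2 := by nlinarith
  obtain rfl | rfl : n = 1 ∨ n = -1 := by omega
  · exact odd_one
  · exact odd_neg_one

lemma linearIndependent_of_pairwise_not_perp8 {ι : Type*} [Fintype ι]
    (hι : Even (Fintype.card ι)) {v : ι → Fin 8 → ℝ} (hv : ∀ i, v i ∈ E7roots)
    (hinj : Function.Injective fun i => ray8 (v i))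
    (hperp : Pairwise fun i j => ¬ Perp8 (ray8 (v i)) (ray8 (v j))) :
    LinearIndependent ℝ v := by
  classical
  choose G hG using fun i j => exists_int_dotProduct_eq_of_mem_E7lattice
    (E7roots_subset_E7lattice (hv i)) (E7roots_subset_E7lattice (hv j))
  refine linearIndependent_of_gram_even_diag_of_odd_offDiag (dotProductBilin ℝ ℝ) hι
    (G := Matrix.of G) hG (fun i => ?_) fun i j hij =>
      odd_dotProduct_of_not_perp8 (hv i) (hv j) (hinj.ne hij) (hperp hij) (hG i j)
  have diag_eq_two : G i i = 2 := by
    exact_mod_cast (hG i i).symm.trans (dotProduct_self_of_mem_E7roots (hv i))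
  simp [diag_eq_two]

/-- The hyperplane of `ℝ⁸` with coordinate sum zero, which contains the `E7` root system; it
bounds the number of linearly independent roots by seven. -/
def E7hyperplane : Submodule ℝ (Fin 8 → ℝ) :=
  LinearMap.ker (∑ i, LinearMap.proj i : (Fin 8 → ℝ) →ₗ[ℝ] ℝ)

lemma mem_E7hyperplane {v : Fin 8 → ℝ} : v ∈ E7hyperplane ↔ ∑ i, v i = 0 := by
  simp [E7hyperplane]

lemma E7hyperplane_ne_top : E7hyperplane ≠ ⊤ := by
  intro h
  have : (1 : Fin 8 → ℝ) ∈ E7hyperplane := h ▸ Submodule.mem_top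
  norm_num [mem_E7hyperplane] at this

theorem ncard_ne_eight_of_pairwise_not_perp8 {S : Set (Submodule ℝ (Fin 8 → ℝ))}
    (hS : S ⊆ E7lines) (hperp : S.Pairwise fun L M => ¬ Perp8 L M) : S.ncard ≠ 8 := by
  intro hcard
  have := (Set.finite_of_ncard_pos (by omega : 0 < S.ncard)).fintype
  have card_eq : Fintype.card S = 8 := by rwa [← Nat.card_eq_fintype_card, Nat.card_coe_set_eq]
  choose v hv hray using fun L : S => hS L.2
  have linInd : LinearIndependent ℝ v := by
    refine linearIndependent_of_pairwise_not_perp8 (by rw [card_eq]; decide) hv ?_ ?_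
    · simpa only [hray] using Subtype.val_injective
    · intro L M hLM
      rw [hray, hray]
      exact hperp L.2 M.2 (Subtype.coe_ne_coe.2 hLM)
  have card_lt := card_lt_finrank_of_linearIndependent_of_mem linInd E7hyperplane_ne_top fun L =>
    mem_E7hyperplane.2 (sum_eq_zero_of_mem_E7lattice (E7roots_subset_E7lattice (hv L)))
  simp [card_eq] at card_lt

lemma single_sub_single_mem_E7roots {i j : Fin 8} (hij : i ≠ j) :
    Pi.single i 1 - Pi.single j 1 ∈ E7roots := by
  obtain ⟨σ, rfl, rfl⟩ : ∃ σ : Equiv.Perm (Fin 8), σ.symm 0 = i ∧ σ.symm 1 = j := by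
    obtain ⟨τ, hi, hj⟩ := MulAction.is_two_pretransitive_iff.1
      (Equiv.Perm.isMultiplyPretransitive (Fin 8) 2) zero_ne_one hij
    exact ⟨τ.symm, hi, hj⟩
  refine ⟨σ, Or.inl (funext fun l => ?_)⟩
  have base : (![1, -1, 0, 0, 0, 0, 0, 0] : Fin 8 → ℝ) = Pi.single 0 1 - Pi.single 1 1 := by
    ext l
    fin_cases l <;> simp
  simp [base, Pi.single_apply, Equiv.eq_symm_apply]

/-- The seven roots `e₀ - e₁, …, e₀ - e₇`, indexed from zero, which span mutually
non-orthogonal lines. -/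
def starRoot (j : Fin 7) : Fin 8 → ℝ := Pi.single 0 1 - Pi.single j.succ 1

lemma starRoot_mem_E7roots (j : Fin 7) : starRoot j ∈ E7roots :=
  single_sub_single_mem_E7roots (Fin.succ_ne_zero j).symm

lemma starRoot_dotProduct_starRoot {j k : Fin 7} (hjk : j ≠ k) :
    starRoot j ⬝ᵥ starRoot k = 1 := by
  simp [starRoot, hjk, Fin.succ_ne_zero]

lemma ray8_starRoot_injective : Function.Injective fun j => ray8 (starRoot j) := by
  intro j k hray
  by_contra hjk
  rw [ray8_eq_ray8_iff_sq_dotProduct_eq_four (starRoot_mem_E7roots j) (starRoot_mem_E7roots k),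
    starRoot_dotProduct_starRoot hjk] at hray
  norm_num at hray

/-- in the `E7` configuration there exist 7-tuples of mutually
non-orthogonal lines, but no 8-tuples of mutually non-orthogonal lines. -/
theorem stmt_9 :
    (∃ S : Set (Submodule ℝ (Fin 8 → ℝ)), S ⊆ E7lines ∧ S.ncard = 7 ∧
        S.Pairwise fun L M => ¬ Perp8 L M) ∧
    ¬ ∃ S : Set (Submodule ℝ (Fin 8 → ℝ)), S ⊆ E7lines ∧ S.ncard = 8 ∧
        S.Pairwise fun L M => ¬ Perp8 L M := by
  constructor
  · refine ⟨Set.range fun j => ray8 (starRoot j), ?_, ?_, ?_⟩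
    · rintro _ ⟨j, rfl⟩
      exact Set.mem_image_of_mem ray8 (starRoot_mem_E7roots j)
    · rw [← Nat.card_coe_set_eq, Nat.card_range_of_injective ray8_starRoot_injective, Nat.card_fin]
    · rintro _ ⟨j, rfl⟩ _ ⟨k, rfl⟩ hne
      have hjk : j ≠ k := fun h => hne (by rw [h])
      simp [perp8_ray8_iff, starRoot_dotProduct_starRoot hjk]
  · rintro ⟨S, hS, hcard, hperp⟩
    exact ncard_ne_eight_of_pairwise_not_perp8 hS hperp hcard
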